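/- Let A₁, …, A_g be pairwise disjoint finite sets of real numbers, let t, r ≥ 1 be integers, define samples and splitters as follows: x ∈ A_i is a sample if its rank in A_i (1-based position in increasing order) is a multiple of t, S is the set of all samples, and y ∈ S is a splitter if its rank in S is a multiple of r. If G is a real number with g ≤ G and r·t ≤ G, then every open interval I ⊆ ℝ containing no splitter satisfies |I ∩ (A₁ ∪ ⋯ ∪ A_g)| ≤ 2·G·t. -/

import Mathlib

open scoped Classical

/-- The 1-based rank of `x` in a finite set of reals `s` (its position when `s` is
listed in increasing order), assuming `x ∈ s`. -/
noncomputable def rank (s : Finset ℝ) (x : ℝ) : ℕ :=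
  (s.filter (fun y => y ≤ x)).card

/-!
Within a set `s`, the elements of an order-connected set `I` have consecutive ranks. Hence if `I`
contains `k` elements of rank divisible by `m`, it contains fewer than `m * (k + 1)` elements of
`s`. With the sample set and `m = r`: an `I` without splitters contains fewer than `r` samples.
With each group and `m = t`, summing over the groups: it contains at most `t` times as many
elements as samples, plus `t` for each group.
-/

open Finset

lemma card_filter_dvd_Ioc (m a b : ℕ) : #{k ∈ Ioc a b | m ∣ k} = b / m - a / m := by
  rcases le_total a b with hab | hba
  · have hdisj : Disjoint {k ∈ Ioc 0 a | m ∣ k} {k ∈ Ioc a b | m ∣ k} :=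
      disjoint_filter_filter (Ioc_disjoint_Ioc_of_le le_rfl)
    have hsplit := card_union_of_disjoint hdisj
    rw [← filter_union, Ioc_union_Ioc_eq_Ioc a.zero_le hab, Nat.Ioc_filter_dvd_card_eq_div,
      Nat.Ioc_filter_dvd_card_eq_div] at hsplit
    omega
  · rw [Ioc_eq_empty_of_le hba, filter_empty, card_empty,
      Nat.sub_eq_zero_of_le (Nat.div_le_div_right hba)]

lemma lt_mul_card_filter_dvd_Ioc_add_one {m : ℕ} (hm : 0 < m) (a n : ℕ) :
    n < m * (#{k ∈ Ioc a (a + n) | m ∣ k} + 1) := by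
  obtain ⟨d, hd⟩ : ∃ d, (a + n) / m = a / m + d :=
    exists_add_of_le (Nat.div_le_div_right le_self_add)
  have hlt : a + n < m * ((a + n) / m + 1) := Nat.lt_mul_div_succ (a + n) hm
  have hle : m * (a / m) ≤ a := Nat.mul_div_le a m
  rw [hd, add_assoc, mul_add] at hlt
  rw [card_filter_dvd_Ioc, hd, add_tsub_cancel_left]
  omega

/-- The rank of `x` in a finite subset `s` of an ordered type: the number of elements of `s` that
are at most `x`. On a linear order it is the 1-based position of `x` if `x ∈ s`; it extends the
function `rank` from `ℝ` to other orders. -/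
def orderRank {α : Type*} [LE α] [DecidableLE α] (s : Finset α) (x : α) : ℕ :=
  #{y ∈ s | y ≤ x}

/-- The elements of `s` whose rank in `s` is a multiple of `m`. The samples of a group are obtained
with `m = t`, and the splitters are obtained from the set of all samples with `m = r`. -/
def everyNth {α : Type*} [LE α] [DecidableLE α] (m : ℕ) (s : Finset α) : Finset α :=
  {x ∈ s | m ∣ orderRank s x}

lemma orderRank_filter_add_orderRank_filter_not {α : Type*} [LE α] [DecidableLE α]
    (s : Finset α) (p : α → Prop) (x : α) :
    orderRank {y ∈ s | p y} x + orderRank {y ∈ s | ¬ p y} x = orderRank s x := by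
  simp only [orderRank]
  rw [filter_comm p, filter_comm (¬ p ·)]
  exact card_filter_add_card_filter_not p

lemma strictMonoOn_orderRank {α : Type*} [Preorder α] [DecidableLE α] (s : Finset α) :
    StrictMonoOn (orderRank s) s := by
  intro x _ y hy hxy
  refine card_lt_card ((ssubset_iff_of_subset ?_).2 ⟨y, ?_, ?_⟩)
  · exact monotone_filter_right s fun _ _ hz => hz.trans hxy.le
  · exact mem_filter.2 ⟨hy, le_rfl⟩
  · exact fun hyx => hxy.not_ge (mem_filter.1 hyx).2

section LinearOrder

variable {α : Type*} [LinearOrder α]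

lemma image_orderRank (s : Finset α) : s.image (orderRank s) = Ioc 0 #s := by
  refine eq_of_subset_of_card_le (image_subset_iff.2 fun x hx => mem_Ioc.2 ⟨?_, ?_⟩) ?_
  · exact card_pos.2 ⟨x, mem_filter.2 ⟨hx, le_rfl⟩⟩
  · exact card_filter_le s (· ≤ x)
  · rw [card_image_of_injOn (strictMonoOn_orderRank s).injOn, Nat.card_Ioc, Nat.sub_zero]

lemma orderRank_eq_of_forall_notMem {I : Set α} (hI : I.OrdConnected) {s : Finset α}
    (hs : ∀ z ∈ s, z ∉ I) {x y : α} (hx : x ∈ I) (hy : y ∈ I) :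
    orderRank s x = orderRank s y := by
  have le_of_le {z x y : α} (hz : z ∈ s) (hx : x ∈ I) (hy : y ∈ I) (hzx : z ≤ x) : z ≤ y :=
    le_of_not_ge fun hyz => hs z hz (hI.out hy hx ⟨hyz, hzx⟩)
  exact congrArg card (filter_congr fun z hz => ⟨le_of_le hz hx hy, le_of_le hz hy hx⟩)

lemma exists_image_orderRank_filter_mem_eq_Ioc {I : Set α} (hI : I.OrdConnected) (s : Finset α) :
    ∃ a, {x ∈ s | x ∈ I}.image (orderRank s) = Ioc a (a + #{x ∈ s | x ∈ I}) := by
  rcases {x ∈ s | x ∈ I}.eq_empty_or_nonempty with hempty | ⟨x₀, hx₀⟩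
  · exact ⟨0, by simp [hempty]⟩
  let a := orderRank {y ∈ s | y ∉ I} x₀
  have hrank : ∀ x ∈ {x ∈ s | x ∈ I}, orderRank s x = a + orderRank {y ∈ s | y ∈ I} x := by
    intro x hx
    have hconst : orderRank {y ∈ s | y ∉ I} x = a :=
      orderRank_eq_of_forall_notMem hI (fun _ hz => (mem_filter.1 hz).2)
        (mem_filter.1 hx).2 (mem_filter.1 hx₀).2
    rw [← orderRank_filter_add_orderRank_filter_not s (· ∈ I), hconst, add_comm]
  refine ⟨a, ?_⟩
  calc {x ∈ s | x ∈ I}.image (orderRank s)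
      = ({x ∈ s | x ∈ I}.image (orderRank {y ∈ s | y ∈ I})).image (a + ·) := by
        rw [image_image]
        exact image_congr hrank
    _ = Ioc a (a + #{x ∈ s | x ∈ I}) := by
        rw [image_orderRank, image_add_left_Ioc, add_zero]

lemma card_filter_mem_lt_mul_card_everyNth_add_one {m : ℕ} (hm : 0 < m) {I : Set α}
    (hI : I.OrdConnected) (s : Finset α) :
    #{x ∈ s | x ∈ I} < m * (#{x ∈ everyNth m s | x ∈ I} + 1) := by
  obtain ⟨a, ha⟩ := exists_image_orderRank_filter_mem_eq_Ioc hI s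
  have hcard : #{k ∈ Ioc a (a + #{x ∈ s | x ∈ I}) | m ∣ k} ≤ #{x ∈ everyNth m s | x ∈ I} := by
    rw [← ha, filter_image, everyNth, filter_comm (· ∈ I)]
    exact card_image_le
  exact (lt_mul_card_filter_dvd_Ioc_add_one hm a _).trans_le (by gcongr)

lemma card_filter_mem_biUnion_le {ι : Type*} {J : Finset ι} {A : ι → Finset α}
    (hA : (J : Set ι).PairwiseDisjoint A) {t : ℕ} (ht : 0 < t) {I : Set α} (hI : I.OrdConnected) :
    #{x ∈ J.biUnion A | x ∈ I} ≤
      t * (#{x ∈ J.biUnion fun i => everyNth t (A i) | x ∈ I} + #J) := by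
  have hsub (i : ι) : {x ∈ everyNth t (A i) | x ∈ I} ⊆ A i :=
    (filter_subset _ _).trans (filter_subset _ _)
  have hdisj : (J : Set ι).PairwiseDisjoint fun i => {x ∈ everyNth t (A i) | x ∈ I} :=
    hA.mono hsub
  simp only [filter_biUnion]
  calc #(J.biUnion fun i => {x ∈ A i | x ∈ I})
      ≤ ∑ i ∈ J, #{x ∈ A i | x ∈ I} := card_biUnion_le
    _ ≤ ∑ i ∈ J, t * (#{x ∈ everyNth t (A i) | x ∈ I} + 1) :=
        sum_le_sum fun i _ => (card_filter_mem_lt_mul_card_everyNth_add_one ht hI (A i)).le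
    _ = t * (#(J.biUnion fun i => {x ∈ everyNth t (A i) | x ∈ I}) + #J) := by
        rw [← mul_sum, sum_add_distrib, ← card_biUnion hdisj, card_eq_sum_ones J]

theorem stmt5_general {ι : Type*} {J : Finset ι} {A : ι → Finset α}
    (hA : (J : Set ι).PairwiseDisjoint A) {t r : ℕ} (ht : 0 < t) (hr : 0 < r)
    {G : ℝ} (hJ : (#J : ℝ) ≤ G) (hrt : (r * t : ℝ) ≤ G) {I : Set α} (hI : I.OrdConnected)
    (hsplitter : ∀ y ∈ everyNth r (J.biUnion fun i => everyNth t (A i)), y ∉ I) :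
    (#{x ∈ J.biUnion A | x ∈ I} : ℝ) ≤ 2 * G * t := by
  have hsamples : #{x ∈ J.biUnion fun i => everyNth t (A i) | x ∈ I} < r := by
    simpa only [filter_eq_empty_iff.2 @hsplitter, card_empty, zero_add, mul_one] using
      card_filter_mem_lt_mul_card_everyNth_add_one hr hI (J.biUnion fun i => everyNth t (A i))
  have hcount : #{x ∈ J.biUnion A | x ∈ I} ≤ (r * t + #J) * t :=
    calc #{x ∈ J.biUnion A | x ∈ I}
        ≤ t * (#{x ∈ J.biUnion fun i => everyNth t (A i) | x ∈ I} + #J) :=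
          card_filter_mem_biUnion_le hA ht hI
      _ ≤ t * (r + #J) := by gcongr
      _ ≤ t * (r * t + #J) := by gcongr; exact Nat.le_mul_of_pos_right r ht
      _ = (r * t + #J) * t := mul_comm _ _
  calc (#{x ∈ J.biUnion A | x ∈ I} : ℝ)
      ≤ (r * t + #J) * t := by exact_mod_cast hcount
    _ ≤ (G + G) * t := by gcongr
    _ = 2 * G * t := by rw [two_mul]

end LinearOrder

/-- Instantiation of the splitter-sampling lemma for the low-depth cache-oblivious
sort: if `g ≤ G` and `r·t ≤ G` then any open interval containing no splitter has at
most `2·G·t` elements of the union of the groups. -/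
theorem stmt5 (g : ℕ) (A : Fin g → Finset ℝ)
    (hdisj : ∀ i j, i ≠ j → Disjoint (A i) (A j))
    (t r : ℕ) (ht : 1 ≤ t) (hr : 1 ≤ r)
    (S : Finset ℝ)
    (hS : S = Finset.univ.biUnion (fun i => (A i).filter (fun x => t ∣ rank (A i) x)))
    (G : ℝ) (hgG : (g : ℝ) ≤ G) (hrtG : (r * t : ℝ) ≤ G)
    (I : Set ℝ) (hIopen : IsOpen I) (hIconn : I.OrdConnected)
    (hnosplitter : ∀ y ∈ S.filter (fun y => r ∣ rank S y), y ∉ I) :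
    ((((Finset.univ.biUnion A).filter (fun x => x ∈ I)).card : ℝ)) ≤ 2 * G * t := by
  subst hS
  exact stmt5_general (fun i _ j _ => hdisj i j) ht hr (by rwa [card_fin]) hrtG hIconn hnosplitter
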